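/- Let n ≥ 1 be an integer, q ∈ (0,1), and let M, j be integers with 1 ≤ M < j ≤ n. Under the Mallows distribution P_n^q on S_n, the events {σ_j = n} and {max(σ_1,…,σ_{j−1}) = max(σ_1,…,σ_M)} are independent; equivalently, P_n^q(σ_j = n and max(σ_1,…,σ_{j−1}) = max(σ_1,…,σ_M)) = ((1−q) q^{n−j}/(1 − q^n)) · (q^{j−1−M} (1 − q^M)/(1 − q^{j−1})). -/

import Mathlib

open Finset Filter

/-- The number of inversions of a permutation of `Fin n`. -/
def invCount (n : ℕ) (σ : Equiv.Perm (Fin n)) : ℕ :=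
  (Finset.univ.filter (fun p : Fin n × Fin n => p.1 < p.2 ∧ σ p.2 < σ p.1)).card

/-- Normalization constant of the Mallows distribution:
`Z_n(q) = ∑_{σ ∈ S_n} q^{inv σ}`. -/
noncomputable def mallowsZ (n : ℕ) (q : ℝ) : ℝ :=
  ∑ σ : Equiv.Perm (Fin n), q ^ invCount n σ

/-- The Mallows probability of a set `A` of permutations:
`P_n^q(A) = (∑_{σ ∈ A} q^{inv σ}) / Z_n(q)`. -/
noncomputable def mallowsProb (n : ℕ) (q : ℝ) (A : Finset (Equiv.Perm (Fin n))) : ℝ :=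
  (∑ σ ∈ A, q ^ invCount n σ) / mallowsZ n q

/-- The success event for the strategy `S(n,M)`.  Positions are indexed by `Fin n`
(the index `i : Fin n` represents the `(i+1)`-st arriving item) and ranks are the
values of `σ` (the value `n-1`, i.e. the top of `Fin n`, represents the highest
rank `n`).  For `M ≥ 1` the strategy succeeds iff for some position `j` with
`(j:ℕ) ≥ M` (i.e. item number `j+1 ≥ M+1`) the item at position `j` has the top
rank and the maximum rank among the items strictly before position `j` equals the
maximum rank among the first `M` items.  For `M = 0` it succeeds iff the first
item has top rank. -/
def winEvent (n M : ℕ) : Finset (Equiv.Perm (Fin n)) :=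
  if M = 0 then
    Finset.univ.filter (fun σ => ∀ i : Fin n, (i : ℕ) = 0 → (σ i : ℕ) = n - 1)
  else
    Finset.univ.filter (fun σ => ∃ j : Fin n, M ≤ (j : ℕ) ∧ (σ j : ℕ) = n - 1 ∧
      (Finset.univ.filter (fun i : Fin n => i < j)).sup (fun i => (σ i : ℕ)) =
      (Finset.univ.filter (fun i : Fin n => (i : ℕ) < M)).sup (fun i => (σ i : ℕ)))

/-- `𝒫_n^q(S(n,M))`, the success probability of the strategy `S(n,M)` under the
Mallows distribution with parameter `q`. -/
noncomputable def succProb (n M : ℕ) (q : ℝ) : ℝ := mallowsProb n q (winEvent n M)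

/-!
Deleting the largest value from a permutation of `n + 1` letters that carries it at position `p`
leaves an arbitrary permutation of `n` letters and destroys exactly the inversions between `p` and
the later positions. Hence the inversion generating function of an event is a sum over `p` of
`q ^ (number of later positions)` times that of the corresponding event on `n` letters.

Count positions from `0` and write `[m] = 1 + q + ⋯ + q ^ (m - 1)`. For the event that the maximum
of the first `k` values is attained among the first `M`, positions `p < M` impose no condition,
positions `M ≤ p < k` are excluded, and positions `p ≥ k` leave the same event behind. By induction
on `n` the probability of this event is `q ^ (k - M) [M] / [k]`, independently of `n`; and putting
the largest value at position `k` contributes an independent factor `q ^ (n - k) / [n + 1]`.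
-/

section InsertMax

variable {n : ℕ}

/-- The permutation of `Fin (n + 1)` with the largest value at position `p` and the values of `τ`,
in order, at the remaining positions. -/
def insertMax (p : Fin (n + 1)) (τ : Equiv.Perm (Fin n)) : Equiv.Perm (Fin (n + 1)) :=
  ((finSuccEquiv' p).trans (Equiv.optionCongr τ)).trans (finSuccEquiv' (Fin.last n)).symm

@[simp]
theorem insertMax_apply_self (p : Fin (n + 1)) (τ : Equiv.Perm (Fin n)) :
    insertMax p τ p = Fin.last n := by
  simp [insertMax]

@[simp]
theorem insertMax_apply_succAbove (p : Fin (n + 1)) (τ : Equiv.Perm (Fin n)) (i : Fin n) :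
    insertMax p τ (p.succAbove i) = (τ i).castSucc := by
  simp [insertMax]

theorem insertMax_apply_eq_last_iff {p i : Fin (n + 1)} {τ : Equiv.Perm (Fin n)} :
    insertMax p τ i = Fin.last n ↔ i = p := by
  rw [← insertMax_apply_self p τ, EmbeddingLike.apply_eq_iff_eq]

theorem insertMax_bijective :
    Function.Bijective fun x : Fin (n + 1) × Equiv.Perm (Fin n) => insertMax x.1 x.2 := by
  rw [Fintype.bijective_iff_injective_and_card]
  refine ⟨?_, by simp [Fintype.card_perm, Nat.factorial_succ]⟩
  rintro ⟨p, τ⟩ ⟨p', τ'⟩ (h : insertMax p τ = insertMax p' τ')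
  obtain rfl : p = p' := by
    rw [← insertMax_apply_eq_last_iff (τ := τ'), ← h, insertMax_apply_self]
  obtain rfl : τ = τ' := by
    refine Equiv.ext fun i => Fin.castSucc_injective n ?_
    rw [← insertMax_apply_succAbove p τ, h, insertMax_apply_succAbove]
  rfl

theorem sum_perm_eq_sum_insertMax {R : Type*} [AddCommMonoid R]
    (f : Equiv.Perm (Fin (n + 1)) → R) :
    ∑ σ, f σ = ∑ p, ∑ τ, f (insertMax p τ) := by
  rw [← Fintype.sum_prod_type']
  exact (insertMax_bijective.sum_comp f).symm

end InsertMax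

section Inversions

variable {n : ℕ}

theorem invCount_eq_sum_card (σ : Equiv.Perm (Fin n)) :
    invCount n σ = ∑ i, #{j | i < j ∧ σ j < σ i} := by
  simp only [invCount, card_filter, Fintype.sum_prod_type]

theorem invCount_insertMax (p : Fin (n + 1)) (τ : Equiv.Perm (Fin n)) :
    invCount (n + 1) (insertMax p τ) = p.rev + invCount n τ := by
  have inversions_at_max :
      #{j | p < j ∧ insertMax p τ j < insertMax p τ p} = (p.rev : ℕ) := by
    have later_positions :
        ({j | p < j ∧ insertMax p τ j < insertMax p τ p} : Finset _) = Ioi p := by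
      ext j
      simp only [insertMax_apply_self, Fin.lt_last_iff_ne_last, ne_eq, insertMax_apply_eq_last_iff,
        mem_filter_univ, mem_Ioi, and_iff_left_iff_imp]
      exact ne_of_gt
    rw [later_positions, Fin.card_Ioi, Fin.val_rev]
    omega
  have inversions_elsewhere (i : Fin n) :
      #{j | p.succAbove i < j ∧ insertMax p τ j < insertMax p τ (p.succAbove i)} =
        #{j | i < j ∧ τ j < τ i} := by
    simp only [card_filter]
    rw [Fin.sum_univ_succAbove _ p]
    simp [(Fin.le_last _).not_gt]
  simp only [invCount_eq_sum_card, Fin.sum_univ_succAbove _ p, inversions_at_max,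
    inversions_elsewhere]

end Inversions

section ReversedSums

theorem sum_fin_rev {R : Type*} [AddCommMonoid R] (N : ℕ) (f : ℕ → R) :
    ∑ p : Fin N, f p.rev = ∑ i ∈ range N, f i :=
  (Equiv.sum_comp Fin.revPerm fun p : Fin N => f p).trans (Fin.sum_univ_eq_sum_range f N)

theorem sum_filter_fin_rev {R : Type*} [AddCommMonoid R] (N : ℕ) (P : ℕ → Prop) [DecidablePred P]
    (f : ℕ → R) :
    ∑ p : Fin N with P p.rev, f p.rev = ∑ i ∈ range N with P i, f i := by
  simp only [sum_filter, sum_fin_rev N fun i => if P i then f i else 0]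

variable {R : Type*} [CommSemiring R]

theorem sum_pow_rev_of_lt (q : R) {M N : ℕ} (hM : M ≤ N) :
    ∑ p : Fin N with p.val < M, q ^ (p.rev : ℕ) = q ^ (N - M) * ∑ i ∈ range M, q ^ i :=
  calc ∑ p : Fin N with p.val < M, q ^ (p.rev : ℕ)
      = ∑ p : Fin N with N - M ≤ p.rev.val, q ^ (p.rev : ℕ) := by
        refine sum_congr (filter_congr fun p _ => ?_) fun _ _ => rfl
        rw [Fin.val_rev]
        omega
    _ = ∑ i ∈ Ico (N - M) N, q ^ i := by
        rw [sum_filter_fin_rev N (N - M ≤ ·) (q ^ ·)]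
        congr 1
        ext i
        simp [and_comm]
    _ = q ^ (N - M) * ∑ i ∈ range M, q ^ i := by
        simp only [sum_Ico_eq_sum_range, Nat.sub_sub_self hM, pow_add, mul_sum]

theorem sum_pow_rev_of_ge (q : R) (k N : ℕ) :
    ∑ p : Fin N with k ≤ p.val, q ^ (p.rev : ℕ) = ∑ i ∈ range (N - k), q ^ i :=
  calc ∑ p : Fin N with k ≤ p.val, q ^ (p.rev : ℕ)
      = ∑ p : Fin N with p.rev.val < N - k, q ^ (p.rev : ℕ) := by
        refine sum_congr (filter_congr fun p _ => ?_) fun _ _ => rfl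
        rw [Fin.val_rev]
        omega
    _ = ∑ i ∈ range (N - k), q ^ i := by
        rw [sum_filter_fin_rev N (· < N - k) (q ^ ·)]
        congr 1
        ext i
        simp only [mem_filter, mem_range]
        omega

end ReversedSums

section GeneratingFunction

variable {R : Type*} [CommSemiring R] {n : ℕ}

/-- The inversion generating function `∑ σ ∈ A, q ^ inv σ` of a set `A` of permutations. It is the
unnormalized Mallows measure of `A`. -/
def invGenFun (q : R) (A : Finset (Equiv.Perm (Fin n))) : R :=
  ∑ σ ∈ A, q ^ invCount n σ

theorem invGenFun_succ (q : R) (A : Finset (Equiv.Perm (Fin (n + 1)))) :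
    invGenFun q A = ∑ p : Fin (n + 1), q ^ (p.rev : ℕ) * invGenFun q {τ | insertMax p τ ∈ A} := by
  calc invGenFun q A
      = ∑ σ, if σ ∈ A then q ^ invCount (n + 1) σ else 0 := by
        rw [invGenFun, sum_ite_mem, univ_inter]
    _ = ∑ p, ∑ τ, if insertMax p τ ∈ A then q ^ invCount (n + 1) (insertMax p τ) else 0 :=
        sum_perm_eq_sum_insertMax _
    _ = ∑ p : Fin (n + 1), q ^ (p.rev : ℕ) * invGenFun q {τ | insertMax p τ ∈ A} := by
        simp only [invGenFun, sum_filter, mul_sum, mul_ite, mul_zero, invCount_insertMax, pow_add]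

theorem invGenFun_univ_succ (q : R) :
    invGenFun q (univ : Finset (Equiv.Perm (Fin (n + 1)))) =
      (∑ i ∈ range (n + 1), q ^ i) * invGenFun q (univ : Finset (Equiv.Perm (Fin n))) := by
  simp only [invGenFun_succ q univ, mem_univ, filter_true, ← sum_mul, sum_fin_rev _ (q ^ ·)]

theorem invGenFun_filter_apply_eq_last (q : R) (A : Finset (Equiv.Perm (Fin (n + 1))))
    (p : Fin (n + 1)) :
    invGenFun q {σ ∈ A | σ p = Fin.last n} =
      q ^ (p.rev : ℕ) * invGenFun q {τ | insertMax p τ ∈ A} := by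
  rw [invGenFun_succ, Fintype.sum_eq_single p]
  · simp
  · intro p' hp'
    simp [insertMax_apply_eq_last_iff, hp'.symm, invGenFun]

end GeneratingFunction

section EarlyMax

/-- The event that the maximum of the first `k` values is attained among the first `M` values,
expressed through pairwise comparisons so that it is visibly compatible with `insertMax`. -/
def earlyMaxEvent (n k M : ℕ) : Finset (Equiv.Perm (Fin n)) :=
  {σ | ∀ i : Fin n, (i : ℕ) < k → ∃ i' : Fin n, (i' : ℕ) < M ∧ σ i ≤ σ i'}

theorem sup_eq_sup_iff_of_subset {ι α : Type*} [LinearOrder α] [OrderBot α] {s t : Finset ι}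
    (hts : t ⊆ s) (ht : t.Nonempty) (f : ι → α) :
    s.sup f = t.sup f ↔ ∀ i ∈ s, ∃ i' ∈ t, f i ≤ f i' := by
  rw [le_antisymm_iff, and_iff_left (sup_mono hts), Finset.sup_le_iff]
  simp only [← sup'_eq_sup ht, le_sup'_iff]

theorem mem_earlyMaxEvent_iff_sup_eq {n k M : ℕ} (hM : 0 < M) (hMk : M ≤ k)
    (σ : Equiv.Perm (Fin n)) :
    σ ∈ earlyMaxEvent n k M ↔
      (univ.filter fun i : Fin n => (i : ℕ) < k).sup (fun i => (σ i : ℕ)) =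
        (univ.filter fun i : Fin n => (i : ℕ) < M).sup (fun i => (σ i : ℕ)) := by
  have prefix_subset :
      (univ.filter fun i : Fin n => (i : ℕ) < M) ⊆ univ.filter fun i : Fin n => (i : ℕ) < k :=
    monotone_filter_right _ fun i _ hi => hi.trans_le hMk
  rcases n.eq_zero_or_pos with rfl | hn
  · simp [earlyMaxEvent, Subsingleton.elim σ 1]
  rw [sup_eq_sup_iff_of_subset prefix_subset ⟨⟨0, hn⟩, by simpa using hM⟩]
  simp [earlyMaxEvent]

theorem succAbove_val_lt_iff {n k : ℕ} {p : Fin (n + 1)} (hk : k ≤ (p : ℕ)) (i : Fin n) :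
    (p.succAbove i : ℕ) < k ↔ (i : ℕ) < k := by
  rcases Fin.castSucc_lt_or_lt_succ p i with h | h
  · simp [Fin.succAbove_of_castSucc_lt _ _ h]
  · rw [Fin.succAbove_of_lt_succ _ _ h, Fin.val_succ]
    have : (p : ℕ) < i + 1 := h
    omega

theorem insertMax_mem_earlyMaxEvent_iff {n k M : ℕ} (p : Fin (n + 1))
    (τ : Equiv.Perm (Fin n)) :
    insertMax p τ ∈ earlyMaxEvent (n + 1) k M ↔
      (p : ℕ) < M ∨ k ≤ (p : ℕ) ∧ τ ∈ earlyMaxEvent n k M := by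
  rcases lt_or_ge (p : ℕ) M with hpM | hpM
  · simp only [hpM, true_or, iff_true, earlyMaxEvent, mem_filter_univ]
    exact fun i _ => ⟨p, hpM, (Fin.le_last _).trans_eq (insertMax_apply_self p τ).symm⟩
  rcases lt_or_ge (p : ℕ) k with hpk | hpk
  · simp only [hpM.not_gt, hpk.not_ge, false_and, or_self, iff_false, earlyMaxEvent,
      mem_filter_univ]
    intro h
    obtain ⟨i, hiM, hi⟩ := h p hpk
    rw [insertMax_apply_self, Fin.last_le_iff, insertMax_apply_eq_last_iff] at hi
    exact (hi ▸ hiM).not_ge hpM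
  · simp [earlyMaxEvent, Fin.forall_iff_succAbove p, Fin.exists_iff_succAbove p, hpM.not_gt,
      hpk, hpk.not_gt, succAbove_val_lt_iff hpk, succAbove_val_lt_iff hpM]

variable {R : Type*} [CommSemiring R]

theorem invGenFun_earlyMaxEvent_succ (q : R) {n k M : ℕ} (hMk : M ≤ k) (hM : M ≤ n + 1) :
    invGenFun q (earlyMaxEvent (n + 1) k M) =
      q ^ (n + 1 - M) * (∑ i ∈ range M, q ^ i) *
          invGenFun q (univ : Finset (Equiv.Perm (Fin n))) +
        (∑ i ∈ range (n + 1 - k), q ^ i) * invGenFun q (earlyMaxEvent n k M) := by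
  have fibre (p : Fin (n + 1)) :
      invGenFun q {τ | insertMax p τ ∈ earlyMaxEvent (n + 1) k M} =
        (if (p : ℕ) < M then invGenFun q (univ : Finset (Equiv.Perm (Fin n))) else 0) +
          if k ≤ (p : ℕ) then invGenFun q (earlyMaxEvent n k M) else 0 := by
    simp only [insertMax_mem_earlyMaxEvent_iff]
    split_ifs with hpM hpk hpk
    · omega
    · simp [hpM]
    · simp [hpM, hpk]
    · simp [hpM, hpk, invGenFun]
  simp only [invGenFun_succ, fibre, mul_add, sum_add_distrib, mul_ite, mul_zero, ← sum_filter,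
    ← sum_mul, sum_pow_rev_of_lt q hM, sum_pow_rev_of_ge]

theorem geom_sum_mul_invGenFun_earlyMaxEvent (q : R) {n k M : ℕ} (hMk : M ≤ k) (hk : k ≤ n) :
    (∑ i ∈ range k, q ^ i) * invGenFun q (earlyMaxEvent n k M) =
      q ^ (k - M) * (∑ i ∈ range M, q ^ i) *
        invGenFun q (univ : Finset (Equiv.Perm (Fin n))) := by
  induction n, hk using Nat.le_induction with
  | base =>
    rcases k with _ | m
    · simp [Nat.le_zero.1 hMk]
    rw [invGenFun_earlyMaxEvent_succ q hMk hMk, invGenFun_univ_succ, Nat.sub_self, range_zero,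
      sum_empty]
    ring
  | succ n hk ih =>
    have geom_sum_split : ∑ i ∈ range (n + 1), q ^ i =
        ∑ i ∈ range (n + 1 - k), q ^ i + q ^ (n + 1 - k) * ∑ i ∈ range k, q ^ i := by
      simp only [mul_sum, ← pow_add, ← sum_range_add, Nat.sub_add_cancel (hk.trans n.le_succ)]
    have pow_split : q ^ (n + 1 - M) = q ^ (n + 1 - k) * q ^ (k - M) := by
      rw [← pow_add, Nat.sub_add_sub_cancel (hk.trans n.le_succ) hMk]
    rw [invGenFun_earlyMaxEvent_succ q hMk (by omega), invGenFun_univ_succ, mul_add,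
      mul_left_comm (∑ i ∈ range k, q ^ i) (∑ i ∈ range (n + 1 - k), q ^ i), ih, pow_split,
      geom_sum_split]
    ring

end EarlyMax

section Probability

variable {n : ℕ} {q : ℝ}

theorem mallowsZ_succ (n : ℕ) (q : ℝ) :
    mallowsZ (n + 1) q = (∑ i ∈ range (n + 1), q ^ i) * mallowsZ n q :=
  invGenFun_univ_succ q

theorem mallowsZ_ne_zero (hq : q ≠ -1) (n : ℕ) : mallowsZ n q ≠ 0 := by
  induction n with
  | zero => simp [mallowsZ, invCount]
  | succ n ih => exact mallowsZ_succ n q ▸ mul_ne_zero (geom_sum_ne_zero hq n.succ_ne_zero) ih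

theorem mallowsProb_filter_apply_eq_last (A : Finset (Equiv.Perm (Fin (n + 1))))
    (p : Fin (n + 1)) :
    mallowsProb (n + 1) q {σ ∈ A | σ p = Fin.last n} =
      q ^ (p.rev : ℕ) / (∑ i ∈ range (n + 1), q ^ i) *
        mallowsProb n q {τ | insertMax p τ ∈ A} := by
  rw [mallowsProb, mallowsProb, mallowsZ_succ, div_mul_div_comm]
  exact congrArg (· / _) (invGenFun_filter_apply_eq_last q A p)

theorem mallowsProb_earlyMaxEvent (hq : q ≠ -1) {k M : ℕ} (hk_ne : k ≠ 0) (hMk : M ≤ k)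
    (hk : k ≤ n) :
    mallowsProb n q (earlyMaxEvent n k M) =
      q ^ (k - M) * (∑ i ∈ range M, q ^ i) / ∑ i ∈ range k, q ^ i := by
  rw [mallowsProb, div_eq_div_iff (mallowsZ_ne_zero hq n) (geom_sum_ne_zero hq hk_ne), mul_comm]
  exact geom_sum_mul_invGenFun_earlyMaxEvent q hMk hk

theorem mallowsProb_earlyMaxEvent_filter_apply_eq_last (hq : q ≠ -1) {k M : ℕ} (hk_ne : k ≠ 0)
    (hMk : M ≤ k) {p : Fin (n + 1)} (hkp : k ≤ (p : ℕ)) :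
    mallowsProb (n + 1) q {σ ∈ earlyMaxEvent (n + 1) k M | σ p = Fin.last n} =
      q ^ (p.rev : ℕ) / (∑ i ∈ range (n + 1), q ^ i) *
        (q ^ (k - M) * (∑ i ∈ range M, q ^ i) / ∑ i ∈ range k, q ^ i) := by
  have fibre_eq : ({τ | insertMax p τ ∈ earlyMaxEvent (n + 1) k M} : Finset _) =
      earlyMaxEvent n k M := by
    ext τ
    simp [insertMax_mem_earlyMaxEvent_iff, hkp, (hMk.trans hkp).not_gt]
  rw [mallowsProb_filter_apply_eq_last, fibre_eq,
    mallowsProb_earlyMaxEvent hq hk_ne hMk (hkp.trans p.is_le)]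

theorem exists_val_eq_and_apply_val_eq_iff {m : ℕ} (f : Fin m → Fin (n + 1)) (p : Fin m) :
    (∃ i : Fin m, (i : ℕ) = p ∧ (f i : ℕ) = n) ↔ f p = Fin.last n := by
  simp [← Fin.ext_iff, Fin.ext_iff (b := Fin.last n)]

end Probability

theorem stmt_18_general (n M j : ℕ) (q : ℝ) (hq : |q| ≠ 1)
    (hM : 1 ≤ M) (hMj : M < j) (hj : j ≤ n) :
    mallowsProb n q (Finset.univ.filter (fun σ : Equiv.Perm (Fin n) =>
        (∃ i : Fin n, (i : ℕ) + 1 = j ∧ (σ i : ℕ) = n - 1) ∧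
        (Finset.univ.filter (fun i : Fin n => (i : ℕ) + 1 < j)).sup (fun i => (σ i : ℕ)) =
        (Finset.univ.filter (fun i : Fin n => (i : ℕ) < M)).sup (fun i => (σ i : ℕ)))) =
      (1 - q) * q ^ (n - j) / (1 - q ^ n) *
        (q ^ (j - 1 - M) * (1 - q ^ M) / (1 - q ^ (j - 1))) := by
  obtain ⟨n, rfl⟩ := Nat.exists_eq_add_of_le' (show 1 ≤ n by omega)
  obtain ⟨k, rfl⟩ := Nat.exists_eq_add_of_le' (show 1 ≤ j by omega)
  have hMk : M ≤ k := by omega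
  have one_sub_ne_zero : 1 - q ≠ 0 := sub_ne_zero.2 fun h => hq (by simp [← h])
  have hq_neg_one : q ≠ -1 := fun h => hq (by simp [h])
  let p : Fin (n + 1) := ⟨k, by omega⟩
  have event_eq : (univ.filter fun σ : Equiv.Perm (Fin (n + 1)) =>
      (∃ i : Fin (n + 1), (i : ℕ) + 1 = k + 1 ∧ (σ i : ℕ) = n + 1 - 1) ∧
      (univ.filter fun i : Fin (n + 1) => (i : ℕ) + 1 < k + 1).sup (fun i => (σ i : ℕ)) =
      (univ.filter fun i : Fin (n + 1) => (i : ℕ) < M).sup (fun i => (σ i : ℕ))) =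
      {σ ∈ earlyMaxEvent (n + 1) k M | σ p = Fin.last n} := by
    ext σ
    simp [mem_earlyMaxEvent_iff_sup_eq hM hMk, ← exists_val_eq_and_apply_val_eq_iff, p, and_comm]
  rw [event_eq,
    mallowsProb_earlyMaxEvent_filter_apply_eq_last hq_neg_one (by omega) hMk (le_refl k)]
  simp only [← mul_neg_geom_sum, mul_div_mul_left _ _ one_sub_ne_zero, mul_left_comm _ (1 - q),
    Fin.val_rev, p, Nat.add_sub_cancel]

theorem stmt_18 (n M j : ℕ) (q : ℝ) (hq : q ∈ Set.Ioo (0 : ℝ) 1)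
    (hM : 1 ≤ M) (hMj : M < j) (hj : j ≤ n) :
    mallowsProb n q (Finset.univ.filter (fun σ : Equiv.Perm (Fin n) =>
        (∃ i : Fin n, (i : ℕ) + 1 = j ∧ (σ i : ℕ) = n - 1) ∧
        (Finset.univ.filter (fun i : Fin n => (i : ℕ) + 1 < j)).sup (fun i => (σ i : ℕ)) =
        (Finset.univ.filter (fun i : Fin n => (i : ℕ) < M)).sup (fun i => (σ i : ℕ)))) =
      (1 - q) * q ^ (n - j) / (1 - q ^ n) *
        (q ^ (j - 1 - M) * (1 - q ^ M) / (1 - q ^ (j - 1))) :=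
  stmt_18_general n M j q (abs_lt.2 ⟨by linarith [hq.1], hq.2⟩).ne hM hMj hj
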